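/- Let q and t be positive integers with t ≥ q, and let H be a q-uniform hypergraph on a vertex set V that is M_{ℵ₀}^{(q)}(t)-free. If H has arbitrarily large finite independent sets (i.e., for every natural number n there exists a finite independent set of H of size at least n), then H has an infinite independent set. -/

import Mathlib

/-- `H` is a `q`-uniform hypergraph on vertex set `V`: every edge has exactly `q` vertices. -/
def IsUniform {V : Type*} (q : ℕ) (H : Set (Finset V)) : Prop :=
  ∀ e ∈ H, e.card = q

/-- `I` is an independent set of the `q`-uniform hypergraph `H`:
no `q`-element subset of `I` is an edge. -/
def IsIndep {V : Type*} (q : ℕ) (H : Set (Finset V)) (I : Set V) : Prop :=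
  ∀ e : Finset V, ↑e ⊆ I → e.card = q → e ∉ H

/-- `H` is `M_{ℵ₀}^{(q)}(t)`-free: there is no infinite sequence of pairwise disjoint
`t`-element independent sets of `H` such that every `q`-element subset of their union
containing at most one vertex from each part is an edge of `H`. -/
def MAleph0Free {V : Type*} (q t : ℕ) (H : Set (Finset V)) : Prop :=
  ¬ ∃ Vs : ℕ → Finset V,
      (∀ i j, i ≠ j → Disjoint (Vs i) (Vs j)) ∧
      (∀ i, (Vs i).card = t) ∧
      (∀ i, IsIndep q H ↑(Vs i)) ∧
      (∀ e : Finset V, e.card = q → (∀ x ∈ e, ∃ i, x ∈ Vs i) →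
        (∀ i, ∀ x ∈ e, ∀ y ∈ e, x ∈ Vs i → y ∈ Vs i → x = y) → e ∈ H)

/-- `Gen p P n e`: for `p`-most `x₁`, ..., `p`-most `xₙ`, the set `e ∪ {x₁, ..., xₙ}` satisfies `P`. -/
def Gen {V : Type*} [DecidableEq V] (p : Ultrafilter V) (P : Finset V → Prop) : ℕ → Finset V → Prop
  | 0, e => P e
  | n + 1, e => ∀ᶠ x in (p : Filter V), Gen p P n (insert x e)

theorem gen_not {V : Type*} [DecidableEq V] (p : Ultrafilter V) (P : Finset V → Prop) (n : ℕ) :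
    ∀ e, Gen p (fun e => ¬ P e) n e ↔ ¬ Gen p P n e := by
  induction n with
  | zero => intro e; rfl
  | succ n ih =>
    intro e
    simp only [Gen, ih]
    exact Ultrafilter.eventually_not

theorem greedy {V : Type*} [DecidableEq V] (p : Ultrafilter V) (P : Finset V → Prop)
    (Q : Finset V → Prop) (q : ℕ) (hfin : ∀ U : Finset V, ∀ᶠ x in (p : Filter V), x ∉ U)
    (hQ : ∀ A ∈ p, ∃ W : Finset V, Q W ∧ ↑W ⊆ A) (hP : Gen p P q ∅) :
    ∃ W : ℕ → Finset V, (∀ i j, i ≠ j → Disjoint (W i) (W j)) ∧ (∀ i, Q (W i)) ∧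
      ∀ e : Finset V, e.card = q → (∀ x ∈ e, ∃ i, x ∈ W i) →
        (∀ i, ∀ x ∈ e, ∀ y ∈ e, x ∈ W i → y ∈ W i → x = y) → P e := by
  have step : ∀ U : Finset V, ∃ W : Finset V, Q W ∧ ∀ x ∈ W, x ∉ U ∧
      ∀ e ∈ U.powerset, ∀ k ∈ Finset.range q, Gen p P (k + 1) e → Gen p P k (insert x e) := by
    intro U
    have : ∀ᶠ x in (p : Filter V), x ∉ U ∧
      ∀ e ∈ U.powerset, ∀ k ∈ Finset.range q, Gen p P (k + 1) e → Gen p P k (insert x e) := by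
      refine (hfin U).and ?_
      rw [Filter.eventually_all_finset]
      intro e _
      rw [Filter.eventually_all_finset]
      intro k _
      by_cases h : Gen p P (k + 1) e
      · have h' : ∀ᶠ x in (p : Filter V), Gen p P k (insert x e) := h
        exact h'.mono fun x hx _ => hx
      · exact Filter.Eventually.of_forall fun x hx => absurd hx h
    obtain ⟨W, hW, hWA⟩ := hQ _ this
    exact ⟨W, hW, fun x hx => hWA hx⟩
  choose g hg1 hg2 using step
  let U : ℕ → Finset V := fun n => Nat.rec ∅ (fun _ u => u ∪ g u) n
  have U0 : U 0 = ∅ := rfl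
  have US : ∀ n, U (n + 1) = U n ∪ g (U n) := fun n => rfl
  have Umono : Monotone U := monotone_nat_of_le_succ fun n => by
    rw [US]; exact Finset.subset_union_left
  have hWU : ∀ i n, i < n → g (U i) ⊆ U n := fun i n h =>
    (by rw [US]; exact Finset.subset_union_right : g (U i) ⊆ U (i + 1)).trans (Umono h)
  have hlt : ∀ i j, i < j → Disjoint (g (U i)) (g (U j)) := by
    intro i j h
    rw [Finset.disjoint_left]
    intro x hx hx'
    exact (hg2 _ x hx').1 (hWU i j h hx)
  have key : ∀ n, ∀ e : Finset V, e ⊆ U n → e.card ≤ q →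
      (∀ i, ∀ x ∈ e, ∀ y ∈ e, x ∈ g (U i) → y ∈ g (U i) → x = y) →
      Gen p P (q - e.card) e := by
    intro n
    induction n with
    | zero =>
      intro e he _ _
      rw [U0, Finset.subset_empty] at he
      subst he
      simpa using hP
    | succ n ih =>
      intro e he hc ht
      by_cases hx : ∃ x ∈ e, x ∈ g (U n)
      · obtain ⟨x, hxe, hxg⟩ := hx
        have hsub : e.erase x ⊆ U n := by
          intro y hy
          rw [Finset.mem_erase] at hy
          have := he hy.2
          rw [US, Finset.mem_union] at this
          rcases this with h | h
          · exact h
          · exact absurd (ht n y hy.2 x hxe h hxg) hy.1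
        have hcard := Finset.card_erase_add_one hxe
        have h1 := ih (e.erase x) hsub (by omega) (fun i a ha b hb =>
          ht i a (Finset.mem_of_mem_erase ha) b (Finset.mem_of_mem_erase hb))
        have h2 := (hg2 _ x hxg).2 (e.erase x) (Finset.mem_powerset.2 hsub) (q - e.card)
          (Finset.mem_range.2 (by omega))
        rw [show q - (e.erase x).card = q - e.card + 1 by omega] at h1
        have h3 := h2 h1
        rwa [Finset.insert_erase hxe] at h3
      · push Not at hx
        refine ih e ?_ hc ht
        intro y hy
        have := he hy
        rw [US, Finset.mem_union] at this
        exact this.resolve_right (hx y hy)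
  refine ⟨fun i => g (U i), ?_, fun i => hg1 _, ?_⟩
  · intro i j hij
    rcases lt_or_gt_of_ne hij with h | h
    · exact hlt i j h
    · exact (hlt j i h).symm
  · intro e hc hcov ht
    have : ∃ n, e ⊆ U n := by
      choose! f hf using hcov
      refine ⟨e.sup f + 1, fun x hx => hWU (f x) _ (Nat.lt_succ_of_le (Finset.le_sup hx)) (hf x hx)⟩
    obtain ⟨n, hn⟩ := this
    have := key n e hn hc.le ht
    rw [hc, Nat.sub_self] at this
    exact this

/-- A set is big if it contains arbitrarily large finite independent sets. -/
def Big {V : Type*} (q : ℕ) (H : Set (Finset V)) (A : Set V) : Prop :=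
  ∀ n : ℕ, ∃ I : Finset V, IsIndep q H ↑I ∧ n ≤ I.card ∧ ↑I ⊆ A

theorem IsIndep.mono {V : Type*} {q : ℕ} {H : Set (Finset V)} {A B : Set V}
    (h : IsIndep q H B) (hAB : A ⊆ B) : IsIndep q H A :=
  fun e he => h e (he.trans hAB)

theorem Big.mono {V : Type*} {q : ℕ} {H : Set (Finset V)} {A B : Set V}
    (h : Big q H A) (hAB : A ⊆ B) : Big q H B := fun n => by
  obtain ⟨I, h1, h2, h3⟩ := h n
  exact ⟨I, h1, h2, h3.trans hAB⟩

theorem Big.union {V : Type*} {q : ℕ} {H : Set (Finset V)} {A B : Set V}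
    (h : Big q H (A ∪ B)) : Big q H A ∨ Big q H B := by
  classical
  by_contra hcon
  simp only [Big, not_or, not_forall] at hcon
  obtain ⟨⟨a, ha⟩, ⟨b, hb⟩⟩ := hcon
  obtain ⟨I, hI, hc, hs⟩ := h (a + b)
  have hsplit := Finset.card_filter_add_card_filter_not (s := I) (fun x => x ∈ A)
  by_cases hac : a ≤ (I.filter (fun x => x ∈ A)).card
  · refine ha ⟨_, hI.mono ?_, hac, ?_⟩
    · intro x hx; simp at hx; exact hx.1
    · intro x hx; simp at hx; exact hx.2
  · refine hb ⟨I.filter (fun x => ¬ x ∈ A), hI.mono ?_, by omega, ?_⟩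
    · intro x hx; simp at hx; exact hx.1
    · intro x hx
      simp at hx
      exact (hs hx.1).resolve_left hx.2

theorem exists_big_ultrafilter {V : Type*} {q : ℕ} {H : Set (Finset V)}
    (h : Big q H Set.univ) : ∃ p : Ultrafilter V, ∀ A ∈ p, Big q H A := by
  have hempty : ¬ Big q H ∅ := by
    intro h
    obtain ⟨I, _, h2, h3⟩ := h 1
    have : I = ∅ := by simpa using h3
    simp [this] at h2
  let F : Filter V :=
    { sets := {A | ¬ Big q H Aᶜ}
      univ_sets := by simpa using hempty
      sets_of_superset := fun {A B} hA hAB hB => hA (hB.mono (Set.compl_subset_compl.2 hAB))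
      inter_sets := fun {A B} hA hB hAB => by
        rw [Set.compl_inter] at hAB
        exact hAB.union.elim hA hB }
  have hF : ∀ A, A ∈ F ↔ ¬ Big q H Aᶜ := fun A => Iff.rfl
  have : F.NeBot := by
    refine ⟨fun hbot => ?_⟩
    have h0 : (∅ : Set V) ∈ F := by rw [hbot]; trivial
    rw [hF, Set.compl_empty] at h0
    exact h0 h
  refine ⟨Ultrafilter.of F, fun A hA => ?_⟩
  by_contra hn
  have h1 : Aᶜ ∈ F := by rw [hF, compl_compl]; exact hn
  have h2 : Aᶜ ∈ Ultrafilter.of F := Ultrafilter.of_le F h1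
  exact (Ultrafilter.compl_mem_iff_notMem.1 h2) hA

/-- If a `q`-uniform hypergraph is `M_{ℵ₀}^{(q)}(t)`-free (`t ≥ q ≥ 1`)
and has arbitrarily large finite independent sets, then it has an infinite
independent set. -/
theorem stmt_7 {V : Type*} (q t : ℕ) (hq : 1 ≤ q) (htq : q ≤ t) (H : Set (Finset V))
    (huni : IsUniform q H) (hfree : MAleph0Free q t H)
    (hind : ∀ n : ℕ, ∃ I : Finset V, IsIndep q H ↑I ∧ n ≤ I.card) :
    ∃ I : Set V, I.Infinite ∧ IsIndep q H I := by
  classical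
  obtain ⟨p, hp⟩ := exists_big_ultrafilter (q := q) (H := H) (fun n => by
    obtain ⟨I, h1, h2⟩ := hind n
    exact ⟨I, h1, h2, Set.subset_univ _⟩)
  have hfin : ∀ U : Finset V, ∀ᶠ x in (p : Filter V), x ∉ U := by
    intro U
    rw [Ultrafilter.eventually_not]
    intro hU
    obtain ⟨I, _, h2, h3⟩ := hp _ hU (U.card + 1)
    have : I ⊆ U := fun x hx => h3 hx
    have := Finset.card_le_card this
    omega
  by_cases hG : Gen p (fun e => e ∈ H) q ∅
  · exfalso
    obtain ⟨W, h1, h2, h3⟩ := greedy p (fun e => e ∈ H)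
      (fun W => W.card = t ∧ IsIndep q H ↑W) q hfin (fun A hA => by
        obtain ⟨I, hI, hc, hs⟩ := hp A hA t
        obtain ⟨J, hJ, hJc⟩ := Finset.exists_subset_card_eq hc
        have hJ' : (J : Set V) ⊆ I := by exact_mod_cast hJ
        exact ⟨J, ⟨hJc, hI.mono hJ'⟩, hJ'.trans hs⟩) hG
    exact hfree ⟨W, h1, fun i => (h2 i).1, fun i => (h2 i).2, h3⟩
  · obtain ⟨W, h1, h2, h3⟩ := greedy p (fun e => ¬ e ∈ H)
      (fun W => ∃ x, W = {x}) q hfin (fun A hA => by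
        obtain ⟨x, hx⟩ := p.nonempty_of_mem hA
        exact ⟨{x}, ⟨x, rfl⟩, by simpa using hx⟩) ((gen_not p _ q ∅).2 hG)
    choose f hf using h2
    have hinj : Function.Injective f := by
      intro i j hij
      by_contra hne
      have := h1 i j hne
      rw [hf i, hf j, hij] at this
      simp at this
    refine ⟨Set.range f, Set.infinite_range_of_injective hinj, ?_⟩
    intro e he hc
    refine h3 e hc ?_ ?_
    · intro x hx
      obtain ⟨i, hi⟩ := he hx
      exact ⟨i, by rw [hf i, ← hi]; simp⟩
    · intro i x _ y _ hxi hyi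
      rw [hf i, Finset.mem_singleton] at hxi hyi
      rw [hxi, hyi]
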